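/- arXiv:1909.01516 — 2 statements merged into one kernel-verified Lean document; each statement's English description precedes it below -/
import Mathlib

section
/- Let H be a frustration-free Hamiltonian on a chain of n qudits as in the setup, with L layers, coarse-grained detectability operator DL(t) and detectability-lemma operator DL(H), for a coarse-graining parameter t with 8L² < t < n/5. Then for any polynomial F of degree at most ⌈t/(8L)⌉ with F(1) = 1, DL(t) = (∏_k (1 − Q_{S_k})) · F(DL(H)† DL(H)) · (∏_k (1 − Q_{T_k})). -/
open scoped ComplexOrder
open scoped Fin.NatCast

variable {E : Type*} [NormedAddCommGroup E] [InnerProductSpace ℂ E] [FiniteDimensional ℂ E]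

/-- An orthogonal projector: a self-adjoint idempotent operator. -/
def IsProjector (P : E →L[ℂ] E) : Prop := IsSelfAdjoint P ∧ P * P = P

/-- The smallest nonzero (for a positive semidefinite operator, smallest positive)
eigenvalue of an operator. -/
noncomputable def minNonzeroEig (A : E →L[ℂ] E) : ℝ :=
  sInf {c : ℝ | 0 < c ∧ ∃ v : E, v ≠ 0 ∧ A v = (c : ℂ) • v}

/-- The Loewner order: `A ⪯ B` iff `B − A` is positive semidefinite. -/
def Loewner (A B : E →L[ℂ] E) : Prop := (B - A).IsPositive

/-- The contiguous (cyclic) segment of `t` qudits starting at qudit `a` of the chain. -/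
def seg {n : ℕ} [NeZero n] (a : Fin n) (t : ℕ) : Finset (Fin n) :=
  (Finset.range t).image (fun k : ℕ => a + (k : Fin n))

/-- The bond `(i, i+1)` lies inside the region `F`. -/
def bondIn {n : ℕ} [NeZero n] (i : Fin n) (F : Finset (Fin n)) : Prop := i ∈ F ∧ i + 1 ∈ F

instance {n : ℕ} [NeZero n] (F : Finset (Fin n)) : DecidablePred (fun i => bondIn i F) :=
  fun i => inferInstanceAs (Decidable (i ∈ F ∧ i + 1 ∈ F))

/-- A frustration-free nearest-neighbour Hamiltonian `H = Σ_{i=1}^n H_i`,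
`H_i = Σ_j P_{ij}`, on a (cyclic) chain of `n` qudits whose joint Hilbert space is `E`:
the `P_{ij}` are orthogonal projectors supported on the qudits `i, i+1`, each failing to
commute with at most `g` other members of the family, and the family is partitioned into
`L` layers of pairwise commuting projectors. -/
structure ChainSetup (n : ℕ) [NeZero n] (E : Type*) [NormedAddCommGroup E]
    [InnerProductSpace ℂ E] [FiniteDimensional ℂ E] where
  /-- the number of projectors making up the interaction `H_i` on the bond `(i, i+1)` -/
  m : Fin n → ℕ
  /-- the projectors `P_{ij}`, supported on the qudits `i, i+1` -/
  P : (i : Fin n) → Fin (m i) → (E →L[ℂ] E)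
  /-- the noncommutation degree -/
  g : ℕ
  /-- the number of layers -/
  L : ℕ
  /-- the assignment of each projector to a layer -/
  layer : ((i : Fin n) × Fin (m i)) → Fin L
  proj : ∀ i j, IsProjector (P i j)
  /-- operational form of two-body locality: interactions on disjoint bonds commute -/
  locality : ∀ (i i' : Fin n) (j : Fin (m i)) (j' : Fin (m i')),
    Disjoint ({i, i + 1} : Finset (Fin n)) ({i', i' + 1} : Finset (Fin n)) →
    Commute (P i j) (P i' j')
  /-- each projector fails to commute with at most `g` other members of the family -/
  gbound : ∀ p : (i : Fin n) × Fin (m i),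
    Nat.card {q : (i : Fin n) × Fin (m i) // q ≠ p ∧ ¬ Commute (P p.1 p.2) (P q.1 q.2)} ≤ g
  /-- projectors within each layer pairwise commute -/
  layers : ∀ p q : (i : Fin n) × Fin (m i), layer p = layer q →
    Commute (P p.1 p.2) (P q.1 q.2)
  /-- frustration-freeness: there is a nonzero state annihilated by every `P_{ij}` -/
  frustFree : ∃ v : E, v ≠ 0 ∧ ∀ i j, P i j v = 0

namespace ChainSetup

variable {n : ℕ} [NeZero n]

/-- the bond interaction `H_i = Σ_j P_{ij}` -/
noncomputable def Hbond (C : ChainSetup n E) (i : Fin n) : E →L[ℂ] E := ∑ j, C.P i j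

/-- the full Hamiltonian `H = Σ_i H_i` -/
noncomputable def Hfull (C : ChainSetup n E) : E →L[ℂ] E := ∑ i, C.Hbond i

/-- `h_F = Σ_{i : i,i+1 ∈ F} H_i`, the Hamiltonian restricted to the region `F` -/
noncomputable def hamOn (C : ChainSetup n E) (F : Finset (Fin n)) : E →L[ℂ] E :=
  ∑ i ∈ Finset.univ.filter (fun i => bondIn i F), C.Hbond i

/-- the spectral gap `γ` of `H` -/
noncomputable def gap (C : ChainSetup n E) : ℝ := minNonzeroEig C.Hfull

/-- The local gap `γ(t)`: the minimum of the spectral gaps of `h_S` over contiguous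
segments `S` of length `t`.  For the open chain (`openBC = true`) only segments that do
not wrap around the end of the chain are allowed. -/
noncomputable def localGap (C : ChainSetup n E) (openBC : Bool) (t : ℕ) : ℝ :=
  sInf {x : ℝ | ∃ a : Fin n, (openBC = true → (a : ℕ) + t ≤ n) ∧
    x = minNonzeroEig (C.hamOn (seg a t))}

/-- `Q_F`: the orthogonal projector onto the orthogonal complement of the ground space of
`h_F` (for `F = ∅` this is `0`). -/
noncomputable def Qproj (C : ChainSetup n E) (F : Finset (Fin n)) : E →L[ℂ] E :=
  (LinearMap.ker (C.hamOn F : E →ₗ[ℂ] E))ᗮ.subtypeL ∘L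
    Submodule.orthogonalProjectionOnto (LinearMap.ker (C.hamOn F : E →ₗ[ℂ] E))ᗮ

end ChainSetup

/-- the cyclic successor on `Fin M` -/
def cyc {M : ℕ} (k : Fin M) : Fin M := ⟨((k : ℕ) + 1) % M, Nat.mod_lt _ k.pos⟩

/-- A coarse-graining configuration with parameter `t` on a chain of `n` qudits:
`⌊n/t⌋` pairwise disjoint contiguous segments `S_k = seg (s k) t` of length `t` in cyclic
order, with `r_k ≤ t/4` qudits between consecutive segments, and pairwise disjoint
contiguous segments `T_k` of length `t` placed between consecutive `S`-segments, each
overlapping `S_k` and `S_{k+1}` in at least `⌊t/4⌋` qudits.  For the open chain, exactly the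
last `T`-segment is empty, `S_1` starts at the first qudit and `S_{⌊n/t⌋}` ends at the last
qudit. -/
structure CoarseGraining (n : ℕ) [NeZero n] (t : ℕ) where
  /-- the number of `S`-segments, `⌊n/t⌋` -/
  M : ℕ
  hM : M = n / t
  hMpos : 0 < M
  /-- the starting points of the `S`-segments -/
  s : Fin M → Fin n
  /-- the numbers `r_k` of qudits sandwiched between consecutive `S`-segments -/
  r : Fin M → ℕ
  hr : ∀ k, 4 * r k ≤ t
  /-- the `S`-segments appear in cyclic order, `S_{k+1}` starting `t + r_k` after `S_k` -/
  hs : ∀ k : Fin M, s (cyc k) = s k + ((t + r k : ℕ) : Fin n)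
  hSdisj : ∀ k l : Fin M, k ≠ l → Disjoint (seg (s k) t) (seg (s l) t)
  /-- the `T`-segments -/
  T : Fin M → Finset (Fin n)
  hT : ∀ k, (∃ a : Fin n, T k = seg a t) ∨ T k = ∅
  hTdisj : ∀ k l : Fin M, k ≠ l → Disjoint (T k) (T l)
  hoverlap₁ : ∀ k, T k ≠ ∅ → t / 4 ≤ ((seg (s k) t) ∩ T k).card
  hoverlap₂ : ∀ k, T k ≠ ∅ → t / 4 ≤ ((seg (s (cyc k)) t) ∩ T k).card
  /-- only the last `T`-segment may be empty (the open-chain case), and in that case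
  `S_1` starts at the first qudit and `S_M` ends at the last qudit -/
  hTempty : ∀ k, T k = ∅ → (k : ℕ) = M - 1 ∧ (s ⟨0, hMpos⟩ : ℕ) = 0 ∧
    (s ⟨M - 1, Nat.sub_lt hMpos one_pos⟩ : ℕ) + t = n

namespace ChainSetup

variable {n : ℕ} [NeZero n]

/-- the coarse-grained Hamiltonian `H̄(t) = Σ_k (Q_{S_k} + Q_{T_k})` -/
noncomputable def coarseHam (C : ChainSetup n E) (t : ℕ) (G : CoarseGraining n t) :
    E →L[ℂ] E :=
  ∑ k, (C.Qproj (seg (G.s k) t) + C.Qproj (G.T k))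

/-- the coarse-grained detectability operator
`DL(t) = (∏_k (1 − Q_{S_k}))·(∏_k (1 − Q_{T_k}))` -/
noncomputable def coarseDL (C : ChainSetup n E) (t : ℕ) (G : CoarseGraining n t) :
    E →L[ℂ] E :=
  ((List.finRange G.M).map (fun k => 1 - C.Qproj (seg (G.s k) t))).prod *
    ((List.finRange G.M).map (fun k => 1 - C.Qproj (G.T k))).prod

/-- the detectability-lemma operator `DL(H) = ∏_{α=1}^L ∏_{(i,j) ∈ T_α} (1 − P_{ij})`,
taken layer by layer -/
noncomputable def DLHam (C : ChainSetup n E) : E →L[ℂ] E :=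
  ((List.finRange C.L).map (fun α =>
    (Finset.univ.filter (fun p : (i : Fin n) × Fin (C.m i) => C.layer p = α)).noncommProd
      (fun p => 1 - C.P p.1 p.2)
      (fun p hp q hq _ =>
        Commute.sub_left (Commute.one_left _)
          (Commute.sub_right (Commute.one_right _)
            (C.layers p q (by
              simp only [Finset.coe_filter, Set.mem_setOf_eq] at hp hq
              rw [hp.2, hq.2])))))).prod

end ChainSetup


namespace Stmt14

/-! ### Abstract monoid lemmas -/

lemma list_absorb_right {R κ : Type*} [Monoid R] (f : κ → R) (x : R) (l : List κ)
    (h : ∀ k ∈ l, f k * x = f k ∨ Commute (f k) x) (hk : ∃ k ∈ l, f k * x = f k) :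
    (l.map f).prod * x = (l.map f).prod := by
  induction l with
  | nil => simp at hk
  | cons a l ih =>
    simp only [List.map_cons, List.prod_cons]
    by_cases hl : ∃ k ∈ l, f k * x = f k
    · rw [mul_assoc, ih (fun k hk => h k (List.mem_cons_of_mem _ hk)) hl]
    · have hc : Commute (l.map f).prod x := by
        apply Commute.list_prod_left
        intro y hy
        obtain ⟨k, hk1, rfl⟩ := List.mem_map.1 hy
        rcases h k (List.mem_cons_of_mem _ hk1) with h1 | h1
        · exact absurd ⟨k, hk1, h1⟩ hl
        · exact h1
      have ha : f a * x = f a := by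
        obtain ⟨k, hk1, hk2⟩ := hk
        rcases List.mem_cons.1 hk1 with rfl | h1
        · exact hk2
        · exact absurd ⟨k, h1, hk2⟩ hl
      rw [mul_assoc, hc.eq, ← mul_assoc, ha]

lemma list_absorb_left {R κ : Type*} [Monoid R] (f : κ → R) (x : R) (l : List κ)
    (h : ∀ k ∈ l, x * f k = f k ∨ Commute x (f k)) (hk : ∃ k ∈ l, x * f k = f k) :
    x * (l.map f).prod = (l.map f).prod := by
  induction l with
  | nil => simp at hk
  | cons a l ih =>
    simp only [List.map_cons, List.prod_cons]
    rcases h a (by simp) with ha | ha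
    · rw [← mul_assoc, ha]
    · by_cases ha' : x * f a = f a
      · rw [← mul_assoc, ha']
      · rw [← mul_assoc, ha.eq, mul_assoc, ih (fun k hk => h k (List.mem_cons_of_mem _ hk))]
        obtain ⟨k, hk1, hk2⟩ := hk
        rcases List.mem_cons.1 hk1 with rfl | h1
        · exact absurd hk2 ha'
        · exact ⟨k, h1, hk2⟩

lemma list_prod_idem {R : Type*} [Monoid R] (l : List R) (hi : ∀ x ∈ l, x * x = x)
    (hc : ∀ x ∈ l, ∀ y ∈ l, Commute x y) : l.prod * l.prod = l.prod := by
  induction l with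
  | nil => simp
  | cons a l ih =>
    have hal : Commute a l.prod := Commute.list_prod_right _ _
      (fun y hy => hc a (by simp) y (List.mem_cons_of_mem _ hy))
    have := ih (fun x hx => hi x (List.mem_cons_of_mem _ hx))
      (fun x hx y hy => hc x (List.mem_cons_of_mem _ hx) y (List.mem_cons_of_mem _ hy))
    rw [List.prod_cons, mul_assoc, ← mul_assoc l.prod, ← hal.eq, mul_assoc, this, ← mul_assoc,
      hi a (by simp)]

lemma list_prod_star {R : Type*} [Monoid R] [StarMul R] (l : List R)
    (hs : ∀ x ∈ l, star x = x) : star l.prod = l.reverse.prod := by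
  induction l with
  | nil => simp
  | cons a l ih =>
    rw [List.prod_cons, star_mul, ih (fun x hx => hs x (List.mem_cons_of_mem _ hx)),
      hs a (by simp), List.reverse_cons, List.prod_append]
    simp

lemma list_prod_reverse {R : Type*} [Monoid R] (l : List R)
    (hc : ∀ x ∈ l, ∀ y ∈ l, Commute x y) : l.reverse.prod = l.prod := by
  induction l with
  | nil => simp
  | cons a l ih =>
    have hal : Commute a l.prod := Commute.list_prod_right _ _
      (fun y hy => hc a (by simp) y (List.mem_cons_of_mem _ hy))
    rw [List.reverse_cons, List.prod_append,
      ih (fun x hx y hy => hc x (List.mem_cons_of_mem _ hx) y (List.mem_cons_of_mem _ hy))]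
    simp [hal.eq]

/-- merging of repeated layers in `D† D`. -/
lemma palindrome {R : Type*} [Monoid R] (l : List R) (hl : l ≠ []) (hi : ∀ x ∈ l, x * x = x) :
    ∃ w ∈ l, ∃ m : List R, (∀ x ∈ m, x ∈ l) ∧ m.length = 2 * (l.length - 1) ∧
      l.reverse.prod * l.prod = w * m.prod ∧
      l.reverse.prod * l.prod * w = l.reverse.prod * l.prod := by
  obtain ⟨a, l1, rfl⟩ := List.exists_cons_of_ne_nil hl
  rcases List.eq_nil_or_concat' l1 with rfl | ⟨l2, b, rfl⟩
  · refine ⟨a, by simp, [], by simp, by simp, ?_, ?_⟩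
    · simpa using hi a (by simp)
    · simp [hi a (by simp)]
  · refine ⟨b, by simp, l2.reverse ++ [a] ++ (l2 ++ [b]), ?_, ?_, ?_, ?_⟩
    · intro x hx
      simp only [List.mem_append, List.mem_reverse, List.mem_cons] at hx ⊢
      tauto
    · simp; omega
    · have ha := hi a (by simp)
      simp only [List.reverse_cons, List.reverse_append, List.prod_append, List.prod_cons,
        List.prod_nil, List.reverse_nil, mul_one, mul_assoc, List.nil_append,
        List.cons_append]
      rw [← mul_assoc a a, ha]
    · have hb := hi b (by simp)
      simp only [List.prod_cons, List.prod_append, List.prod_nil, mul_one, mul_assoc, hb]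

lemma pow_merge {R : Type*} [Monoid R] (A w m : R) (h1 : A = w * m) (h2 : A * w = A) (q : ℕ) :
    A ^ (q + 1) = w * m ^ (q + 1) := by
  induction q with
  | zero => simpa using h1
  | succ q ih =>
    have : A ^ (q + 1) * w = A ^ (q + 1) := by rw [pow_succ, mul_assoc, h2]
    calc A ^ (q + 1 + 1) = A ^ (q + 1) * (w * m) := by rw [pow_succ, ← h1]
      _ = w * m ^ (q + 1 + 1) := by rw [← mul_assoc, this, ih, mul_assoc, ← pow_succ]

/-! ### Arithmetic -/

lemma arith (L q t : ℕ) (hL : 0 < L) (ht : 8 * L ^ 2 < t)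
    (hq : q ≤ ⌈(t : ℝ) / (8 * (L : ℝ))⌉₊) : 2 * (L - 1) * q + 1 ≤ t / 4 := by
  have hL' : (0 : ℝ) < L := by exact_mod_cast hL
  have h1 : 8 * L * q < t + 8 * L := by
    have h2 : (⌈(t : ℝ) / (8 * (L : ℝ))⌉₊ : ℝ) < (t : ℝ) / (8 * (L : ℝ)) + 1 :=
      Nat.ceil_lt_add_one (by positivity)
    have h3 : (q : ℝ) < (t : ℝ) / (8 * (L : ℝ)) + 1 := lt_of_le_of_lt (by exact_mod_cast hq) h2
    have h4 : (8 * L * q : ℝ) < t + 8 * L := by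
      have := mul_lt_mul_of_pos_left h3 (show (0 : ℝ) < 8 * L by positivity)
      have h5 : (8 * L : ℝ) * ((t : ℝ) / (8 * (L : ℝ)) + 1) = t + 8 * L := by
        field_simp
      linarith
    exact_mod_cast h4
  obtain ⟨l, rfl⟩ : ∃ l, L = l + 1 := ⟨L - 1, by omega⟩
  rw [Nat.le_div_iff_mul_le (by norm_num)]
  simp only [Nat.add_sub_cancel]
  rcases Nat.lt_or_ge (l + 1) q with h | h
  · nlinarith
  · have : l * q ≤ l * (l + 1) := Nat.mul_le_mul_left _ h
    nlinarith

/-! ### Geometry on the ring -/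

section geom
variable {n : ℕ} [NeZero n]

lemma val_sub' (y a s : Fin n) : ((a - s : Fin n) : ℕ) ≤ ((y - s : Fin n) : ℕ) ∧
      ((y - a : Fin n) : ℕ) = ((y - s : Fin n) : ℕ) - ((a - s : Fin n) : ℕ) ∨
    ((y - s : Fin n) : ℕ) < ((a - s : Fin n) : ℕ) ∧
      ((y - a : Fin n) : ℕ) = n + ((y - s : Fin n) : ℕ) - ((a - s : Fin n) : ℕ) := by
  have h : y - a = (y - s) - (a - s) := by abel
  rw [h]
  rcases le_or_gt (a - s) (y - s) with h1 | h1
  · left; exact ⟨h1, Fin.coe_sub_iff_le.2 h1⟩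
  · right; exact ⟨h1, Fin.coe_sub_iff_lt.2 h1⟩

lemma mem_seg {a y : Fin n} {t : ℕ} (ht : t ≤ n) : y ∈ seg a t ↔ ((y - a : Fin n) : ℕ) < t := by
  unfold seg
  simp only [Finset.mem_image, Finset.mem_range]
  constructor
  · rintro ⟨k, hk, rfl⟩
    rw [add_sub_cancel_left, Fin.val_natCast, Nat.mod_eq_of_lt (by omega)]
    exact hk
  · intro h
    exact ⟨_, h, by rw [Fin.cast_val_eq_self]; abel⟩

lemma geom_T {t r v : ℕ} (hn : 5 * t < n) (hv : 0 < v) (hvt : v ≤ t) (hr : 4 * r ≤ t)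
    (s s' a : Fin n)
    (hs : s' = s + ((t + r : ℕ) : Fin n)) (h1 : v ≤ (seg s t ∩ seg a t).card)
    (h2 : v ≤ (seg s' t ∩ seg a t).card) (y : Fin n) (hy1 : t - v ≤ ((y - s : Fin n) : ℕ))
    (hy2 : ((y - s : Fin n) : ℕ) < t + r + v) : y ∈ seg a t := by
  have hs' : ((s' - s : Fin n) : ℕ) = t + r := by
    rw [hs, add_sub_cancel_left, Fin.val_natCast, Nat.mod_eq_of_lt (by omega)]
  have key : ∀ (p b : ℕ) (A : Finset (Fin n)),
      (∀ z ∈ A, p ≤ ((z - s : Fin n) : ℕ) ∧ ((z - s : Fin n) : ℕ) < b) → A.card ≤ b - p := by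
    intro p b A hA
    have := Finset.card_le_card_of_injOn (s := A) (t := Finset.Ico p b)
      (fun z => ((z - s : Fin n) : ℕ)) (fun z hz => by simpa using hA z hz)
      (fun z _ w _ h => by
        have := Fin.ext h
        exact sub_left_injective this)
    simpa using this
  set x := ((a - s : Fin n) : ℕ) with hx
  have hxn : x < n := (a - s).isLt
  have hxt : x < t := by
    by_contra hxt
    have : (seg s' t ∩ seg a t).card ≤ 0 ∨ (seg s t ∩ seg a t).card ≤ 0 := by
      by_cases hc : n < x + t
      · left
        have := key 0 0 (seg s' t ∩ seg a t) (by
          intro z hz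
          rw [Finset.mem_inter, mem_seg (by omega), mem_seg (by omega)] at hz
          have e1 := val_sub' z a s
          have e2 := val_sub' z s' s
          have := (z - s).isLt
          omega)
        simpa using this
      · right
        have := key 0 0 (seg s t ∩ seg a t) (by
          intro z hz
          rw [Finset.mem_inter, mem_seg (by omega), mem_seg (by omega)] at hz
          have e1 := val_sub' z a s
          have := (z - s).isLt
          omega)
        simpa using this
    omega
  have c1 := key x t (seg s t ∩ seg a t) (by
          intro z hz
          rw [Finset.mem_inter, mem_seg (by omega), mem_seg (by omega)] at hz
          have e1 := val_sub' z a s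
          have := (z - s).isLt
          omega)
  have c2 := key (t + r) (x + t) (seg s' t ∩ seg a t) (by
          intro z hz
          rw [Finset.mem_inter, mem_seg (by omega), mem_seg (by omega)] at hz
          have e1 := val_sub' z a s
          have e2 := val_sub' z s' s
          have := (z - s).isLt
          omega)
  rw [mem_seg (by omega)]
  have e1 := val_sub' y a s
  omega

lemma cover {t : ℕ} (ht : 0 < t) (hn : 5 * t < n) (G : CoarseGraining n t) (b : Fin n) :
    ∃ k, ((b - G.s k : Fin n) : ℕ) < t + G.r k := by
  have : Nonempty (Fin G.M) := ⟨⟨0, G.hMpos⟩⟩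
  obtain ⟨k, hk⟩ := Finite.exists_min (fun k => ((b - G.s k : Fin n) : ℕ))
  refine ⟨k, ?_⟩
  by_contra hcon
  have h1 := hk (cyc k)
  have hr := G.hr k
  have e := val_sub' b (G.s (cyc k)) (G.s k)
  have hs' : ((G.s (cyc k) - G.s k : Fin n) : ℕ) = t + G.r k := by
    rw [G.hs k, add_sub_cancel_left, Fin.val_natCast, Nat.mod_eq_of_lt (by omega)]
  omega

/-- `Acone Sb j i`: every bond within distance `< j` of the bond `i` satisfies `Sb`. -/
def Acone (Sb : Fin n → Prop) : ℕ → Fin n → Prop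
  | 0, _ => True
  | j + 1, i => Sb i ∧ Acone Sb j i ∧ Acone Sb j (i + 1) ∧ Acone Sb j (i - 1)

lemma Acone_mono (Sb : Fin n → Prop) {j k : ℕ} (h : j ≤ k) (i : Fin n) (hk : Acone Sb k i) :
    Acone Sb j i := by
  induction h with
  | refl => exact hk
  | step _ ih => exact ih hk.2.1

lemma val_succ (hn : 1 < n) (y s : Fin n) :
    ((y + 1 - s : Fin n) : ℕ) = ((y - s : Fin n) : ℕ) + 1 ∧ ((y - s : Fin n) : ℕ) + 1 < n ∨
    ((y + 1 - s : Fin n) : ℕ) = 0 ∧ ((y - s : Fin n) : ℕ) + 1 = n := by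
  have h : y + 1 - s = (y - s) + 1 := by abel
  have h1 : ((1 : Fin n) : ℕ) = 1 := by
    rw [Fin.val_one', Nat.mod_eq_of_lt hn]
  have hlt := (y - s).isLt
  rw [h, Fin.val_add, h1]
  rcases Nat.lt_or_ge (((y - s : Fin n) : ℕ) + 1) n with h2 | h2
  · left; exact ⟨Nat.mod_eq_of_lt h2, h2⟩
  · right
    have h3 : ((y - s : Fin n) : ℕ) + 1 = n := by omega
    exact ⟨by rw [h3, Nat.mod_self], h3⟩

lemma not_Acone {t : ℕ} (hn : 5 * t < n) (ht : 4 ≤ t) (G : CoarseGraining n t)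
    (Sb : Fin n → Prop)
    (hSb : ∀ i k, bondIn i (seg (G.s k) t) → Sb i)
    (hopen : (∃ k, G.T k = ∅) → Sb ⟨n - 1, by omega⟩)
    (j : ℕ) (hj : j ≤ t / 4) (i : Fin n) (h : ¬ Acone Sb j i) :
    ∃ k, G.T k ≠ ∅ ∧ t ≤ ((i - G.s k : Fin n) : ℕ) + j ∧
      ((i - G.s k : Fin n) : ℕ) + 1 < t + G.r k + j := by
  induction j generalizing i with
  | zero => exact absurd trivial h
  | succ j ih =>
    have ih := ih (by omega)
    by_cases h0 : Sb i
    · by_cases h1 : Acone Sb j i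
      · by_cases h2 : Acone Sb j (i + 1)
        · by_cases h3 : Acone Sb j (i - 1)
          · exact absurd ⟨h0, h1, h2, h3⟩ h
          · obtain ⟨k, hk, ha, hb⟩ := ih _ h3
            refine ⟨k, hk, ?_⟩
            have hr := G.hr k
            have := val_succ (by omega) (i - 1) (G.s k)
            rw [sub_add_cancel] at this
            omega
        · obtain ⟨k, hk, ha, hb⟩ := ih _ h2
          refine ⟨k, hk, ?_⟩
          have hr := G.hr k
          have := val_succ (by omega) i (G.s k)
          omega
      · obtain ⟨k, hk, ha, hb⟩ := ih _ h1
        exact ⟨k, hk, by omega, by omega⟩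
    · obtain ⟨k, hk⟩ := cover (by omega) hn G i
      have hr := G.hr k
      have hd : t ≤ ((i - G.s k : Fin n) : ℕ) + 1 := by
        by_contra hd
        apply h0
        apply hSb i k
        have := val_succ (by omega) i (G.s k)
        exact ⟨(mem_seg (by omega)).2 (by omega), (mem_seg (by omega)).2 (by omega)⟩
      refine ⟨k, ?_, by omega, by omega⟩
      intro hT
      apply h0
      obtain ⟨hkM, hs0, hsM⟩ := G.hTempty k hT
      have hMpos := G.hMpos
      have hk' : k = ⟨G.M - 1, Nat.sub_lt G.hMpos one_pos⟩ := Fin.ext hkM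
      have hc : cyc k = ⟨0, G.hMpos⟩ := by
        apply Fin.ext
        simp only [cyc, hkM]
        rw [Nat.sub_add_cancel hMpos, Nat.mod_self]
      rw [← hk'] at hsM
      have hs := congrArg Fin.val (G.hs k)
      rw [hc, hs0, Fin.val_add, Fin.val_natCast, Nat.mod_eq_of_lt (a := t + G.r k) (by omega),
        ← Nat.add_assoc, hsM, Nat.add_mod_left, Nat.mod_eq_of_lt (by omega)] at hs
      have hi : i = ⟨n - 1, by omega⟩ := by
        apply Fin.ext
        have e1 : (i : ℕ) = ((i - G.s k + G.s k : Fin n) : ℕ) := by rw [sub_add_cancel]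
        rw [Fin.val_add, Nat.mod_eq_of_lt (by omega)] at e1
        show (i : ℕ) = n - 1
        omega
      rw [hi]
      exact hopen ⟨k, hT⟩

lemma bond_T {t : ℕ} (hn : 5 * t < n) (ht : 4 ≤ t) (G : CoarseGraining n t)
    (Sb : Fin n → Prop)
    (hSb : ∀ i k, bondIn i (seg (G.s k) t) → Sb i)
    (hopen : (∃ k, G.T k = ∅) → Sb ⟨n - 1, by omega⟩)
    (j : ℕ) (hj : j ≤ t / 4) (i : Fin n) (h : ¬ Acone Sb j i) :
    ∃ k, bondIn i (G.T k) := by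
  obtain ⟨k, hk, ha, hb⟩ := not_Acone hn ht G Sb hSb hopen j hj i h
  refine ⟨k, ?_⟩
  have h1 := G.hoverlap₁ k hk
  have h2 := G.hoverlap₂ k hk
  have hr := G.hr k
  rcases G.hT k with ⟨a, hTa⟩ | hT0
  · rw [hTa] at h1 h2 ⊢
    have hgeom := geom_T hn (v := t / 4) (by omega) (by omega) hr _ _ a (G.hs k) h1 h2
    have := val_succ (by omega) i (G.s k)
    exact ⟨hgeom i (by omega) (by omega), hgeom (i + 1) (by omega) (by omega)⟩
  · exact absurd hT0 hk

end geom

/-! ### Operator lemmas -/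

section ops
variable {n : ℕ} [NeZero n] (C : ChainSetup n E)

abbrev Idx := (i : Fin n) × Fin (C.m i)

/-- the factor `1 - P_p` -/
noncomputable def fac (p : Idx C) : E →L[ℂ] E := 1 - C.P p.1 p.2

lemma fac_idem (p : Idx C) : fac C p * fac C p = fac C p := by
  have h := (C.proj p.1 p.2).2
  unfold fac
  rw [mul_sub, sub_mul, sub_mul, h]
  simp

lemma fac_star (p : Idx C) : star (fac C p) = fac C p := by
  have h : star (C.P p.1 p.2) = C.P p.1 p.2 := (C.proj p.1 p.2).1
  unfold fac
  rw [star_sub, star_one, h]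

lemma fac_comm {p q : Idx C} (h : Commute (C.P p.1 p.2) (C.P q.1 q.2)) :
    Commute (fac C p) (fac C q) :=
  Commute.sub_left (Commute.one_left _) (Commute.sub_right (Commute.one_right _) h)

lemma Qproj_eq (S : Finset (Fin n)) :
    C.Qproj S = (LinearMap.ker (C.hamOn S : E →ₗ[ℂ] E))ᗮ.starProjection := rfl

lemma Qproj_star (S : Finset (Fin n)) : star (C.Qproj S) = C.Qproj S := by
  rw [Qproj_eq]
  exact isSelfAdjoint_starProjection _

lemma Qproj_comm (S : Finset (Fin n)) (A : E →L[ℂ] E) (hA : star A = A)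
    (h : Commute A (C.hamOn S)) : Commute (C.Qproj S) A := by
  rw [Qproj_eq]
  set U := LinearMap.ker (C.hamOn S : E →ₗ[ℂ] E) with hU
  have hAs : ∀ x y : E, inner ℂ (A x) y = inner ℂ x (A y) := by
    intro x y
    have h1 : ContinuousLinearMap.adjoint A = A := hA
    conv_lhs => rw [← h1]
    rw [ContinuousLinearMap.adjoint_inner_left]
  have hUU : ∀ u ∈ U, A u ∈ U := by
    intro u hu
    have hu' : C.hamOn S u = 0 := by simpa [hU] using hu
    have h2 : C.hamOn S (A u) = A (C.hamOn S u) := by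
      have := congrArg (fun f : E →L[ℂ] E => f u) h.eq
      simpa using this.symm
    have : C.hamOn S (A u) = 0 := by rw [h2, hu', map_zero]
    simpa [hU] using this
  have hUp : ∀ u ∈ Uᗮ, A u ∈ Uᗮ := by
    intro u hu
    rw [Submodule.mem_orthogonal] at hu ⊢
    intro w hw
    rw [← hAs]
    exact hu _ (hUU w hw)
  ext v
  show Uᗮ.starProjection (A v) = A (Uᗮ.starProjection v)
  apply Submodule.eq_starProjection_of_mem_orthogonal
  · exact hUp _ (Submodule.starProjection_apply_mem _ _)
  · rw [← map_sub]
    have : v - Uᗮ.starProjection v ∈ Uᗮᗮ := Submodule.sub_starProjection_mem_orthogonal v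
    rw [Submodule.orthogonal_orthogonal] at this ⊢
    exact hUU _ this

lemma P_inner (p : Idx C) (v : E) :
    inner ℂ v (C.P p.1 p.2 v) = ((‖C.P p.1 p.2 v‖ ^ 2 : ℝ) : ℂ) := by
  obtain ⟨h1, h2⟩ := C.proj p.1 p.2
  have h1' : ContinuousLinearMap.adjoint (C.P p.1 p.2) = C.P p.1 p.2 := h1
  have h3 : C.P p.1 p.2 v = C.P p.1 p.2 (C.P p.1 p.2 v) := by
    have := congrArg (fun f : E →L[ℂ] E => f v) h2
    simpa using this.symm
  rw [h3, ← ContinuousLinearMap.adjoint_inner_left, h1', inner_self_eq_norm_sq_to_K, ← h3]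
  simp

lemma sum_zero (B : Finset (Fin n)) (v : E) (h : (∑ i ∈ B, C.Hbond i) v = 0) (i : Fin n)
    (hi : i ∈ B) (j : Fin (C.m i)) : C.P i j v = 0 := by
  have h1 : inner ℂ v ((∑ i ∈ B, C.Hbond i) v) = 0 := by rw [h, inner_zero_right]
  have h2 : ((∑ i ∈ B, ∑ j, ‖C.P i j v‖ ^ 2 : ℝ) : ℂ) = 0 := by
    rw [← h1]
    simp only [sum_apply, ChainSetup.Hbond, inner_sum]
    push_cast
    refine Finset.sum_congr rfl fun i _ => Finset.sum_congr rfl fun j _ => ?_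
    have := P_inner C ⟨i, j⟩ v
    rw [this]; push_cast; rfl
  have h3 : (∑ i ∈ B, ∑ j, ‖C.P i j v‖ ^ 2 : ℝ) = 0 := by exact_mod_cast h2
  rw [Finset.sum_eq_zero_iff_of_nonneg (fun i _ => Finset.sum_nonneg fun j _ => by positivity)]
    at h3
  have h4 := h3 i hi
  rw [Finset.sum_eq_zero_iff_of_nonneg (fun j _ => by positivity)] at h4
  have h5 := h4 j (Finset.mem_univ _)
  simpa using h5

lemma P_zero (i : Fin n) (h : C.Hbond i = 0) (j : Fin (C.m i)) : C.P i j = 0 := by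
  ext v
  have := sum_zero C {i} v (by simp [h]) i (by simp) j
  simpa using this

lemma fac_mul_Q (S : Finset (Fin n)) (p : Idx C) (hp : bondIn p.1 S) :
    fac C p * (1 - C.Qproj S) = 1 - C.Qproj S := by
  have : C.P p.1 p.2 * (1 - C.Qproj S) = 0 := by
    ext v
    show C.P p.1 p.2 (v - C.Qproj S v) = 0
    have hm : v - C.Qproj S v ∈ (LinearMap.ker (C.hamOn S : E →ₗ[ℂ] E))ᗮᗮ := by
      rw [Qproj_eq]
      exact Submodule.sub_starProjection_mem_orthogonal v
    rw [Submodule.orthogonal_orthogonal] at hm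
    exact sum_zero C (Finset.univ.filter (fun i => bondIn i S)) _ (LinearMap.mem_ker.1 hm) p.1
      (by simpa using hp) p.2
  unfold fac
  rw [sub_mul, this, one_mul, sub_zero]

lemma Q_mul_fac (S : Finset (Fin n)) (p : Idx C) (hp : bondIn p.1 S) :
    (1 - C.Qproj S) * fac C p = 1 - C.Qproj S := by
  have := congrArg star (fac_mul_Q C S p hp)
  simpa [star_mul, star_sub, fac_star, Qproj_star] using this

lemma Q_comm_fac (S S' : Finset (Fin n)) (hd : Disjoint S S') (p : Idx C)
    (hp : bondIn p.1 S) : Commute (1 - C.Qproj S') (fac C p) := by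
  refine Commute.sub_left (Commute.one_left _) ?_
  apply Qproj_comm C S' _ (fac_star C p)
  refine Commute.sub_left (Commute.one_left _) ?_
  unfold ChainSetup.hamOn ChainSetup.Hbond
  refine Commute.sum_right _ _ _ fun i hi => Commute.sum_right _ _ _ fun j _ => ?_
  apply C.locality
  have hi' : bondIn i S' := by simpa using hi
  rw [Finset.disjoint_left] at hd ⊢
  intro a ha hb
  simp only [Finset.mem_insert, Finset.mem_singleton] at ha hb
  refine hd (a := a) ?_ ?_
  · rcases ha with rfl | rfl
    exacts [hp.1, hp.2]
  · rcases hb with rfl | rfl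
    exacts [hi'.1, hi'.2]

lemma prodQ_mul_fac {M : ℕ} (S : Fin M → Finset (Fin n))
    (hd : ∀ k l, k ≠ l → Disjoint (S k) (S l)) (p : Idx C) (hp : ∃ k, bondIn p.1 (S k)) :
    ((List.finRange M).map (fun k => 1 - C.Qproj (S k))).prod * fac C p =
      ((List.finRange M).map (fun k => 1 - C.Qproj (S k))).prod := by
  obtain ⟨k, hk⟩ := hp
  apply list_absorb_right
  · intro l _
    by_cases h : k = l
    · subst h; left; exact Q_mul_fac C _ p hk
    · right; exact Q_comm_fac C _ _ (hd k l h) p hk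
  · exact ⟨k, List.mem_finRange k, Q_mul_fac C _ p hk⟩

lemma fac_mul_prodQ {M : ℕ} (S : Fin M → Finset (Fin n))
    (hd : ∀ k l, k ≠ l → Disjoint (S k) (S l)) (p : Idx C) (hp : ∃ k, bondIn p.1 (S k)) :
    fac C p * ((List.finRange M).map (fun k => 1 - C.Qproj (S k))).prod =
      ((List.finRange M).map (fun k => 1 - C.Qproj (S k))).prod := by
  obtain ⟨k, hk⟩ := hp
  apply list_absorb_left
  · intro l _
    by_cases h : k = l
    · subst h; left; exact fac_mul_Q C _ p hk
    · right; exact (Q_comm_fac C _ _ (hd k l h) p hk).symm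
  · exact ⟨k, List.mem_finRange k, fac_mul_Q C _ p hk⟩

/-! ### Layers and the light cone -/

/-- `w` is a product of factors from a single layer -/
def IsLayer (w : E →L[ℂ] E) : Prop :=
  ∃ l : List (Idx C), (∀ p ∈ l, ∀ q ∈ l, C.layer p = C.layer q) ∧ w = (l.map (fac C)).prod

lemma layer_comm {l : List (Idx C)} (hl : ∀ p ∈ l, ∀ q ∈ l, C.layer p = C.layer q) :
    ∀ x ∈ l.map (fac C), ∀ y ∈ l.map (fac C), Commute x y := by
  intro x hx y hy
  obtain ⟨p, hp, rfl⟩ := List.mem_map.1 hx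
  obtain ⟨q, hq, rfl⟩ := List.mem_map.1 hy
  exact fac_comm C (C.layers p q (hl p hp q hq))

lemma IsLayer.idem {w : E →L[ℂ] E} (h : IsLayer C w) : w * w = w := by
  obtain ⟨l, hl, rfl⟩ := h
  apply list_prod_idem _ _ (layer_comm C hl)
  intro x hx
  obtain ⟨p, hp, rfl⟩ := List.mem_map.1 hx
  exact fac_idem C p

lemma IsLayer.star_eq {w : E →L[ℂ] E} (h : IsLayer C w) : star w = w := by
  obtain ⟨l, hl, rfl⟩ := h
  rw [list_prod_star, list_prod_reverse _ (layer_comm C hl)]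
  intro x hx
  obtain ⟨p, hp, rfl⟩ := List.mem_map.1 hx
  exact fac_star C p

/-- the monoid generated by factors outside the `j`-th cone -/
noncomputable def Nmon (Sb : Fin n → Prop) (j : ℕ) : Submonoid (E →L[ℂ] E) :=
  Submonoid.closure {x | ∃ p : Idx C, ¬ Acone Sb j p.1 ∧ x = fac C p}

lemma Nmon_mono (Sb : Fin n → Prop) {j k : ℕ} (h : j ≤ k) : Nmon C Sb j ≤ Nmon C Sb k := by
  apply Submonoid.closure_mono
  rintro x ⟨p, hp, rfl⟩
  exact ⟨p, fun h' => hp (Acone_mono Sb h _ h'), rfl⟩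

lemma cone_comm (Sb : Fin n → Prop) (j : ℕ) (p : Idx C) (hp : Acone Sb (j + 1) p.1)
    (Y : E →L[ℂ] E) (hY : Y ∈ Nmon C Sb j) : Commute Y (fac C p) := by
  induction hY using Submonoid.closure_induction with
  | mem x hx =>
    obtain ⟨q, hq, rfl⟩ := hx
    apply fac_comm
    apply C.locality
    rw [Finset.disjoint_left]
    intro a ha hb
    simp only [Finset.mem_insert, Finset.mem_singleton] at ha hb
    apply hq
    obtain ⟨-, h1, h2, h3⟩ := hp
    rcases ha with ha | ha <;> rcases hb with hb | hb
    · rw [← ha, hb]; exact h1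
    · rw [← ha, hb]; exact h2
    · have : q.1 = p.1 - 1 := by rw [← hb, ha]; abel
      rw [this]; exact h3
    · have : q.1 = p.1 := add_right_cancel (ha.symm.trans hb)
      rw [this]; exact h1
  | one => exact Commute.one_left _
  | mul x y _ _ hx hy => exact hx.mul_left hy

/-- one more layer -/
lemma step (Sb : Fin n → Prop) (A : E →L[ℂ] E)
    (hA : ∀ p : Idx C, Sb p.1 → A * fac C p = A) (j : ℕ) (X w : E →L[ℂ] E)
    (hX : ∃ Y ∈ Nmon C Sb j, A * X = A * Y) (hw : IsLayer C w) :
    ∃ Y ∈ Nmon C Sb (j + 1), A * (X * w) = A * Y := by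
  obtain ⟨Y, hY, hXY⟩ := hX
  obtain ⟨l, hl, rfl⟩ := hw
  -- process the factors of the layer one by one, from the right end of the list
  have key : ∀ l' : List (Idx C), (∀ p ∈ l', p ∈ l) → ∃ Z ∈ Nmon C Sb (j + 1),
      (∀ p ∈ l, Commute Z (fac C p)) ∧ A * (Y * (l'.map (fac C)).prod) = A * (Y * Z) := by
    intro l' hl'
    induction l' with
    | nil => exact ⟨1, one_mem _, fun p _ => Commute.one_left _, by simp⟩
    | cons p l' ih =>
      obtain ⟨Z, hZ, hZc, hZe⟩ := ih (fun q hq => hl' q (List.mem_cons_of_mem _ hq))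
      have hpl : p ∈ l := hl' p (by simp)
      have hcomm : Commute (fac C p) (l'.map (fac C)).prod := by
        apply Commute.list_prod_right
        intro x hx
        obtain ⟨q, hq, rfl⟩ := List.mem_map.1 hx
        exact fac_comm C (C.layers p q (hl p hpl q (hl' q (List.mem_cons_of_mem _ hq))))
      have e : A * (Y * ((p :: l').map (fac C)).prod) = A * (Y * (Z * fac C p)) := by
        rw [List.map_cons, List.prod_cons, hcomm.eq, ← mul_assoc Y, ← mul_assoc A, hZe]
        simp only [mul_assoc]
      by_cases hp : Acone Sb (j + 1) p.1
      · refine ⟨Z, hZ, hZc, ?_⟩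
        have hYp := cone_comm C Sb j p hp Y hY
        rw [e, (hZc p hpl).eq, ← mul_assoc Y, hYp.eq, mul_assoc, ← mul_assoc A, hA p hp.1]
      · refine ⟨Z * fac C p, mul_mem hZ (Submonoid.subset_closure ⟨p, hp, rfl⟩), ?_, e⟩
        intro q hq
        exact (hZc q hq).mul_left (fac_comm C (C.layers p q (hl p hpl q hq)))
  obtain ⟨Z, hZ, -, hZe⟩ := key l (fun p hp => hp)
  refine ⟨Y * Z, mul_mem (Nmon_mono C Sb (Nat.le_succ j) hY) hZ, ?_⟩
  rw [← hZe, ← mul_assoc, hXY, mul_assoc]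

lemma steps (Sb : Fin n → Prop) (A : E →L[ℂ] E)
    (hA : ∀ p : Idx C, Sb p.1 → A * fac C p = A) (l : List (E →L[ℂ] E))
    (hl : ∀ w ∈ l, IsLayer C w) (j : ℕ) (X : E →L[ℂ] E)
    (hX : ∃ Y ∈ Nmon C Sb j, A * X = A * Y) :
    ∃ Y ∈ Nmon C Sb (j + l.length), A * (X * l.prod) = A * Y := by
  induction l generalizing j X with
  | nil => simpa using hX
  | cons w l ih =>
    have h1 := step C Sb A hA j X w hX (hl w (by simp))
    have h2 := ih (fun w hw => hl w (List.mem_cons_of_mem _ hw)) (j + 1) _ h1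
    rw [List.prod_cons, ← mul_assoc, List.length_cons]
    rwa [show j + (l.length + 1) = j + 1 + l.length by omega]

lemma steps_pow (Sb : Fin n → Prop) (A : E →L[ℂ] E)
    (hA : ∀ p : Idx C, Sb p.1 → A * fac C p = A) (l : List (E →L[ℂ] E))
    (hl : ∀ w ∈ l, IsLayer C w) (j : ℕ) (X : E →L[ℂ] E)
    (hX : ∃ Y ∈ Nmon C Sb j, A * X = A * Y) (q : ℕ) :
    ∃ Y ∈ Nmon C Sb (j + l.length * q), A * (X * l.prod ^ q) = A * Y := by
  induction q with
  | zero => simpa using hX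
  | succ q ih =>
    have := steps C Sb A hA l hl _ _ ih
    rw [pow_succ, ← mul_assoc]
    rwa [show j + l.length * (q + 1) = j + l.length * q + l.length by ring]

lemma DL_list : ∃ l : List (E →L[ℂ] E), l.length = C.L ∧ (∀ w ∈ l, IsLayer C w) ∧
    C.DLHam = l.prod := by
  classical
  refine ⟨_, ?_, ?_, rfl⟩
  · simp
  · intro w hw
    obtain ⟨α, -, rfl⟩ := List.mem_map.1 hw
    refine ⟨(Finset.univ.filter (fun p : Idx C => C.layer p = α)).toList, ?_, ?_⟩
    · intro p hp q hq
      simp at hp hq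
      rw [hp, hq]
    · rw [← Finset.noncommProd_toFinset _ _ _ (Finset.nodup_toList _)]
      · apply Finset.noncommProd_congr
        · simp
        · intro x _; rfl
      · intro p hp q hq _
        simp at hp hq
        exact fac_comm C (C.layers p q (by rw [hp, hq]))

lemma main_pow (Sb : Fin n → Prop) (A B : E →L[ℂ] E) (K q : ℕ)
    (hA : ∀ p : Idx C, Sb p.1 → A * fac C p = A)
    (hB : ∀ p : Idx C, ¬ Acone Sb K p.1 → fac C p * B = B)
    (hL : 0 < C.L) (hK : 2 * (C.L - 1) * q + 1 ≤ K) :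
    A * (ContinuousLinearMap.adjoint C.DLHam * C.DLHam) ^ q * B = A * B := by
  have hNB : ∀ Y ∈ Nmon C Sb K, Y * B = B := by
    intro Y hY
    induction hY using Submonoid.closure_induction with
    | mem x hx => obtain ⟨p, hp, rfl⟩ := hx; exact hB p hp
    | one => simp
    | mul x y _ _ hx hy => rw [mul_assoc, hy, hx]
  obtain ⟨l, hlen, hl, hD⟩ := DL_list C
  have hadj : ContinuousLinearMap.adjoint C.DLHam = l.reverse.prod := by
    rw [hD]
    exact list_prod_star l (fun x hx => (hl x hx).star_eq)
  rcases q with _ | q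
  · simp
  have hne : l ≠ [] := by rintro rfl; simp at hlen; omega
  obtain ⟨w, hw, m, hm, hmlen, h1, h2⟩ := palindrome l hne (fun x hx => (hl x hx).idem)
  rw [hadj, hD, pow_merge _ w m.prod h1 h2 q]
  have h0 := step C Sb A hA 0 1 w ⟨1, one_mem _, rfl⟩ (hl w hw)
  rw [one_mul] at h0
  obtain ⟨Y, hY, hAY⟩ := steps_pow C Sb A hA m (fun x hx => hl x (hm x hx)) _ w h0 (q + 1)
  rw [hAY, mul_assoc, hNB Y]
  refine Nmon_mono C Sb ?_ hY
  rw [hmlen, hlen]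
  omega

end ops
end Stmt14

/-- for a frustration-free chain Hamiltonian as in the setup with `L` layers
and coarse-graining parameter `8L² < t < n/5`, and for any polynomial `F` of degree at most
`⌈t/(8L)⌉` with `F(1) = 1`,
`DL(t) = (∏_k (1 − Q_{S_k})) · F(DL(H)† DL(H)) · (∏_k (1 − Q_{T_k}))`. -/
theorem stmt_14 {n : ℕ} [NeZero n] (C : ChainSetup n E)
    (t : ℕ) (ht1 : 8 * C.L ^ 2 < t) (ht2 : 5 * t < n)
    (G : CoarseGraining n t)
    (hopen : (∃ k, G.T k = ∅) → C.Hbond ⟨n - 1, by omega⟩ = 0)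
    (F : Polynomial ℂ) (hdeg : F.natDegree ≤ ⌈(t : ℝ) / (8 * (C.L : ℝ))⌉₊)
    (hF1 : F.eval 1 = 1) :
    C.coarseDL t G =
      ((List.finRange G.M).map (fun k => 1 - C.Qproj (seg (G.s k) t))).prod *
        Polynomial.aeval (ContinuousLinearMap.adjoint C.DLHam * C.DLHam) F *
        ((List.finRange G.M).map (fun k => 1 - C.Qproj (G.T k))).prod := by
  have hpow : ∀ q ≤ F.natDegree,
      ((List.finRange G.M).map (fun k => 1 - C.Qproj (seg (G.s k) t))).prod *
        (ContinuousLinearMap.adjoint C.DLHam * C.DLHam) ^ q *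
        ((List.finRange G.M).map (fun k => 1 - C.Qproj (G.T k))).prod = C.coarseDL t G := by
    intro q hq
    have hq' := hq.trans hdeg
    rcases Nat.eq_zero_or_pos C.L with hL | hL
    · rw [hL] at hq'
      have : q = 0 := by simpa using hq'
      subst this
      simp [ChainSetup.coarseDL]
    have hK := Stmt14.arith C.L q t hL ht1 hq'
    have ht4 : 4 ≤ t := by
      have : 0 < C.L ^ 2 := by positivity
      omega
    refine Stmt14.main_pow C
      (fun i => (∃ k, bondIn i (seg (G.s k) t)) ∨ C.Hbond i = 0) _ _ _ q ?_ ?_ hL hK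
    · rintro p (hp | hp)
      · exact Stmt14.prodQ_mul_fac C (fun k => seg (G.s k) t) G.hSdisj p hp
      · simp [Stmt14.fac, Stmt14.P_zero C p.1 hp p.2]
    · intro p hp
      refine Stmt14.fac_mul_prodQ C G.T G.hTdisj p ?_
      exact Stmt14.bond_T ht2 ht4 G
        (fun i => (∃ k, bondIn i (seg (G.s k) t)) ∨ C.Hbond i = 0) (fun i k h => Or.inl ⟨k, h⟩) (fun h => Or.inr (hopen h))
        _ le_rfl p.1 hp
  rw [Polynomial.aeval_eq_sum_range, Finset.mul_sum, Finset.sum_mul]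
  rw [Finset.sum_congr rfl (g := fun q => F.coeff q • C.coarseDL t G) (fun q hq => by
    rw [mul_smul_comm, smul_mul_assoc, hpow q (by simpa [Nat.lt_succ_iff] using hq)])]
  rw [← Finset.sum_smul]
  rw [Polynomial.eval_eq_sum_range] at hF1
  simp only [one_pow, mul_one] at hF1
  rw [hF1, one_smul]
end

section
/- (Knabe's theorem.) Let H = Σ_{i=1}^n P_{i,i+1} be a translationally invariant nearest-neighbour frustration-free Hamiltonian on a periodic chain of n spins, where each P_{i,i+1} is an orthogonal projector acting on spins i, i+1 (indices mod n), all equal to the same two-body projector. Let γ be the spectral gap of H, and for 3 ≤ t < n let γ(t) be the spectral gap of h_{k,t} = Σ_{i=k+1}^{k+t−1} P_{i,i+1} (independent of k by translation invariance). Then γ + 1/(t−2) ≥ ((t−1)/(t−2))·γ(t). -/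
open scoped Fin.NatCast

variable {E : Type*} [NormedAddCommGroup E] [InnerProductSpace ℂ E] [FiniteDimensional ℂ E]

/-- Spectral lower bound: any lower bound of the positive eigenvalues is a gap. -/
lemma gap_bound (T : E →L[ℂ] E) (hT : (T : E →ₗ[ℂ] E).IsSymmetric)
    (hpos : ∀ v, 0 ≤ (inner ℂ v (T v)).re) (g : ℝ)
    (hg : ∀ c : ℝ, 0 < c → (∃ v : E, v ≠ 0 ∧ T v = (c : ℂ) • v) → g ≤ c) (v : E) :
    g * (inner ℂ v (T v)).re ≤ ‖T v‖ ^ 2 := by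
  set b := hT.eigenvectorBasis rfl with hb
  set l := hT.eigenvalues rfl with hl
  have hTb : ∀ i, T (b i) = (l i : ℂ) • b i := fun i => hT.apply_eigenvectorBasis rfl i
  have hl0 : ∀ i, 0 ≤ l i := by
    intro i
    have := hpos (b i)
    rw [hTb, inner_smul_right, inner_self_eq_norm_sq_to_K, b.norm_eq_one] at this
    simpa using this
  have hc : ∀ i, inner ℂ (b i) (T v) = (l i : ℂ) * inner ℂ (b i) v := by
    intro i
    have : inner ℂ (T (b i)) v = inner ℂ (b i) (T v) := hT (b i) v
    rw [← this, hTb, inner_smul_left]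
    simp
  have h1 : ‖T v‖ ^ 2 = ∑ i, l i ^ 2 * ‖inner ℂ (b i) v‖ ^ 2 := by
    rw [← b.sum_sq_norm_inner_right (T v)]
    refine Finset.sum_congr rfl fun i _ => ?_
    rw [hc, norm_mul, mul_pow]
    simp
  have h2 : (inner ℂ v (T v)).re = ∑ i, l i * ‖inner ℂ (b i) v‖ ^ 2 := by
    rw [← b.sum_inner_mul_inner v (T v), Complex.re_sum]
    refine Finset.sum_congr rfl fun i _ => ?_
    rw [hc, mul_left_comm, ← inner_conj_symm v (b i), Complex.conj_mul']
    norm_cast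
  rw [h1, h2, Finset.mul_sum]
  refine Finset.sum_le_sum fun i _ => ?_
  rw [← mul_assoc]
  refine mul_le_mul_of_nonneg_right ?_ (by positivity)
  rcases (hl0 i).eq_or_lt with h | h
  · rw [← h]; simp
  · have := hg (l i) h ⟨b i, b.orthonormal.ne_zero i, hTb i⟩
    nlinarith

lemma proj_inner (P : E →L[ℂ] E) (h : IsProjector P) (v : E) :
    inner ℂ v (P v) = inner ℂ (P v) (P v) := by
  have hs := h.1.isSymmetric
  have : P (P v) = P v := by
    conv_rhs => rw [← h.2]
    rfl
  have h2 : inner ℂ (P v) (P v) = inner ℂ v (P (P v)) := hs v (P v)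
  rw [h2, this]

lemma proj_comm_nonneg (P Q : E →L[ℂ] E) (hP : IsProjector P) (hQ : IsProjector Q)
    (hc : Commute P Q) (v : E) : 0 ≤ (inner ℂ (P v) (Q v)).re := by
  have e1 : P (Q v) = Q (P v) := congrArg (fun A : E →L[ℂ] E => A v) hc.eq
  have hQQ : Q (Q v) = Q v := congrArg (fun A : E →L[ℂ] E => A v) hQ.2
  have h1 : inner ℂ (Q (P v)) (Q v) = inner ℂ (P v) (Q (Q v)) := hQ.1.isSymmetric (P v) (Q v)
  have h2 : inner ℂ (P (Q v)) (Q v) = inner ℂ (Q v) (P (Q v)) := hP.1.isSymmetric (Q v) (Q v)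
  rw [← hQQ, ← h1, ← e1, h2, proj_inner P hP]
  exact inner_self_nonneg (𝕜 := ℂ)

lemma sum_proj_symm {ι : Type*} (s : Finset ι) (P : ι → (E →L[ℂ] E))
    (h : ∀ i, IsProjector (P i)) :
    ((∑ i ∈ s, P i : E →L[ℂ] E) : E →ₗ[ℂ] E).IsSymmetric := by
  have : IsSelfAdjoint (∑ i ∈ s, P i) := by
    exact isSelfAdjoint_sum s fun i _ => (h i).1
  exact this.isSymmetric

lemma sum_proj_inner {ι : Type*} (s : Finset ι) (P : ι → (E →L[ℂ] E))
    (h : ∀ i, IsProjector (P i)) (v : E) :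
    (inner ℂ v ((∑ i ∈ s, P i) v)).re = ∑ i ∈ s, ‖P i v‖ ^ 2 := by
  rw [ContinuousLinearMap.sum_apply, inner_sum, Complex.re_sum]
  refine Finset.sum_congr rfl fun i _ => ?_
  rw [proj_inner _ (h i), inner_self_eq_norm_sq_to_K]
  norm_cast

lemma sum_norm_sq {ι : Type*} (s : Finset ι) (P : ι → (E →L[ℂ] E)) (v : E) :
    ‖(∑ i ∈ s, P i) v‖ ^ 2 = ∑ i ∈ s, ∑ j ∈ s, (inner ℂ (P i v) (P j v)).re := by
  rw [ContinuousLinearMap.sum_apply, ← inner_self_eq_norm_sq (𝕜 := ℂ)]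
  simp only [sum_inner, inner_sum, map_sum]
  rw [Finset.sum_comm]
  rfl

/-- Counting lemma. -/
lemma count_le {n : ℕ} [NeZero n] (t : ℕ) (ht1 : 3 ≤ t) (ht2 : t < n) (F : Fin n → ℝ)
    (hF : ∀ d : Fin n, d ≠ 0 → d ≠ 1 → d ≠ -1 → 0 ≤ F d) :
    ∑ a : Fin n with a.val < t - 1, ∑ b : Fin n with b.val < t - 1, F (b - a)
      ≤ ((t : ℝ) - 2) * ∑ d, F d + F 0 := by
  set A : Finset (Fin n) := Finset.univ.filter fun a => a.val < t - 1 with hA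
  have hAc : ∀ m, m ≤ n → (Finset.univ.filter fun a : Fin n => a.val < m).card = m := by
    intro m hm
    rw [Fin.card_filter_val_lt]
    omega
  have hswap : ∑ a ∈ A, ∑ b ∈ A, F (b - a)
      = ∑ d, ((A.filter fun a => a + d ∈ A).card : ℝ) * F d := by
    have : ∀ a ∈ A, ∑ b ∈ A, F (b - a) = ∑ d, if a + d ∈ A then F d else 0 := by
      intro a _
      rw [← Finset.sum_filter]
      refine Finset.sum_bij' (fun b _ => b - a) (fun d _ => a + d) ?_ ?_ ?_ ?_ ?_ <;> simp
    rw [Finset.sum_congr rfl this, Finset.sum_comm]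
    refine Finset.sum_congr rfl fun d _ => ?_
    rw [← Finset.sum_filter, Finset.sum_const, nsmul_eq_mul]
  have hone : (1 : Fin n).val = 1 := by
    rw [Fin.val_one', Nat.mod_eq_of_lt (by omega)]
  have hadd : ∀ a d : Fin n, (a + d).val = if n ≤ a.val + d.val then a.val + d.val - n
      else a.val + d.val := fun a d => Fin.val_add_eq_ite a d
  have hneg : (-1 : Fin n).val = n - 1 := by
    rw [Fin.val_neg', hone, Nat.mod_eq_of_lt (by omega)]
  have c0 : (A.filter fun a => a + 0 ∈ A).card = t - 1 := by
    rw [← hAc (t - 1) (by omega)]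
    congr 1
    ext a
    simp [hA]
  have c1 : (A.filter fun a => a + 1 ∈ A).card = t - 2 := by
    rw [← hAc (t - 2) (by omega)]
    congr 1
    ext a
    have := a.isLt
    simp only [hA, Finset.mem_filter, Finset.mem_univ, true_and, hadd, hone]
    split_ifs <;> omega
  have ile : ∀ d : Fin n, d ≠ 0 → (A.filter fun a => a + d ∈ A).card ≤ t - 2 := by
    intro d hd
    have hd0 : d.val ≠ 0 := fun h => hd (Fin.ext (by simpa using h))
    have hdl := d.isLt
    obtain ⟨a, haA, ha⟩ : ∃ a : Fin n, a ∈ A ∧ a + d ∉ A := by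
      by_cases h : d.val ≤ t - 1
      · refine ⟨⟨t - 1 - d.val, by omega⟩, ?_, ?_⟩ <;>
          simp only [hA, Finset.mem_filter, Finset.mem_univ, true_and, hadd]
        · omega
        · split_ifs <;> omega
      · refine ⟨⟨0, by omega⟩, ?_, ?_⟩ <;>
          simp only [hA, Finset.mem_filter, Finset.mem_univ, true_and, hadd]
        · omega
        · split_ifs <;> omega
    have hs : (A.filter fun a => a + d ∈ A) ⊆ A.erase a := by
      intro x hx
      rw [Finset.mem_filter] at hx
      refine Finset.mem_erase.2 ⟨?_, hx.1⟩
      rintro rfl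
      exact ha hx.2
    have := Finset.card_le_card hs
    rw [Finset.card_erase_of_mem haA, hAc (t - 1) (by omega)] at this
    omega
  have cm : (A.filter fun a => a + (-1) ∈ A).card = t - 2 := by
    rw [← c1]
    refine Finset.card_bij' (fun a _ => a + (-1)) (fun a _ => a + 1) ?_ ?_ ?_ ?_
    · intro a ha
      rw [Finset.mem_filter] at ha ⊢
      simpa using ha.symm
    · intro a ha
      rw [Finset.mem_filter] at ha ⊢
      simpa using ha.symm
    · simp
    · simp
  have hcast : ((t - 2 : ℕ) : ℝ) = (t : ℝ) - 2 := by
    rw [Nat.cast_sub (by omega)]; norm_num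
  have hcast1 : ((t - 1 : ℕ) : ℝ) = (t : ℝ) - 1 := by
    rw [Nat.cast_sub (by omega)]; norm_num
  have hF0 : F 0 = ∑ d : Fin n, if d = 0 then F d else 0 := by simp
  rw [hswap, hF0, Finset.mul_sum, ← Finset.sum_add_distrib]
  refine Finset.sum_le_sum fun d _ => ?_
  by_cases h0 : d = 0
  · subst h0
    rw [c0, hcast1, if_pos rfl]
    linarith
  rw [if_neg h0, add_zero]
  by_cases h1 : d = 1
  · subst h1
    rw [c1, hcast]
  by_cases h2 : d = -1
  · subst h2
    rw [cm, hcast]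
  · rw [← hcast]
    exact mul_le_mul_of_nonneg_right (by exact_mod_cast ile d h0) (hF d h0 h1 h2)

lemma range_sum_eq {n : ℕ} [NeZero n] {M : Type*} [AddCommMonoid M] (m : ℕ) (hm : m ≤ n)
    (f : Fin n → M) :
    ∑ j ∈ Finset.range m, f (j : Fin n) = ∑ a : Fin n with a.val < m, f a := by
  refine Finset.sum_bij' (fun j _ => (j : Fin n)) (fun a _ => a.val) ?_ ?_ ?_ ?_ ?_
  · intro j hj
    have := Finset.mem_range.1 hj
    simp [Fin.val_natCast, Nat.mod_eq_of_lt (this.trans_le hm), this]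
  · intro a ha
    simpa using ha
  · intro j hj
    have := Finset.mem_range.1 hj
    simp [Fin.val_natCast, Nat.mod_eq_of_lt (this.trans_le hm)]
  · intro a _
    simp
  · intro j _
    rfl

/-- Knabe's theorem: let `H = Σ_{i=1}^n P_{i,i+1}` be a translationally
invariant nearest-neighbour frustration-free Hamiltonian on a periodic chain of `n` spins,
each `P_{i,i+1}` an orthogonal projector acting only on the spins `i, i+1` (so projectors
on disjoint bonds commute), all equal to the same two-body projector (translation
invariance is expressed by conjugation with a translation unitary `U`).  Let `γ` be the
spectral gap of `H` and, for `3 ≤ t < n`, let `γ(t)` be the spectral gap of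
`h_{k,t} = Σ_{i=k+1}^{k+t-1} P_{i,i+1}` (independent of `k`).  Then
`γ + 1/(t−2) ≥ ((t−1)/(t−2))·γ(t)`. -/
theorem stmt_17 {n : ℕ} [NeZero n]
    (P : Fin n → (E →L[ℂ] E))
    (hproj : ∀ i, IsProjector (P i))
    (hloc : ∀ i i' : Fin n,
      Disjoint ({i, i + 1} : Finset (Fin n)) ({i', i' + 1} : Finset (Fin n)) →
      Commute (P i) (P i'))
    (U : E →L[ℂ] E)
    (hU1 : U * ContinuousLinearMap.adjoint U = 1)
    (hU2 : ContinuousLinearMap.adjoint U * U = 1)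
    (hTI : ∀ i : Fin n, P (i + 1) = U * P i * ContinuousLinearMap.adjoint U)
    (hff : ∃ v : E, v ≠ 0 ∧ ∀ i, P i v = 0)
    (t : ℕ) (ht1 : 3 ≤ t) (ht2 : t < n)
    (γ : ℝ) (hγ : γ = minNonzeroEig (∑ i, P i))
    (γt : ℝ)
    (hγt : ∀ k : Fin n,
      γt = minNonzeroEig (∑ j ∈ Finset.range (t - 1), P (k + (j : Fin n)))) :
    ((t : ℝ) - 1) / ((t : ℝ) - 2) * γt ≤ γ + 1 / ((t : ℝ) - 2) := by
  have ht3 : (3 : ℝ) ≤ t := by exact_mod_cast ht1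
  have ht0 : (0 : ℝ) < (t : ℝ) - 2 := by linarith
  set A : Finset (Fin n) := Finset.univ.filter fun a => a.val < t - 1 with hA
  have hhk : ∀ k : Fin n, ∑ j ∈ Finset.range (t - 1), P (k + (j : Fin n))
      = ∑ a ∈ A, P (k + a) := fun k =>
    range_sum_eq (t - 1) (by omega) fun a => P (k + a)
  have hHpos : ∀ v, 0 ≤ (inner ℂ v ((∑ i, P i) v)).re := by
    intro v
    rw [sum_proj_inner _ _ hproj]
    positivity
  have hHsymm := sum_proj_symm Finset.univ P hproj
  have hbdd : ∀ T : E →L[ℂ] E,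
      BddBelow {c : ℝ | 0 < c ∧ ∃ v : E, v ≠ 0 ∧ T v = (c : ℂ) • v} :=
    fun T => ⟨0, fun c hc => hc.1.le⟩
  rcases Set.eq_empty_or_nonempty
    {c : ℝ | 0 < c ∧ ∃ v : E, v ≠ 0 ∧ (∑ i, P i) v = (c : ℂ) • v} with hem | hne
  · have hP0 : ∀ i, P i = 0 := by
      intro i
      ext v
      have key : ∀ g : ℝ, g * (inner ℂ v ((∑ i, P i) v)).re ≤ ‖(∑ i, P i) v‖ ^ 2 := by
        intro g
        refine gap_bound _ hHsymm hHpos g ?_ v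
        intro c hc hv
        have : c ∈ {c : ℝ | 0 < c ∧ ∃ v : E, v ≠ 0 ∧ (∑ i, P i) v = (c : ℂ) • v} := ⟨hc, hv⟩
        rw [hem] at this
        exact this.elim
      have hz : (inner ℂ v ((∑ i, P i) v)).re ≤ 0 := by
        by_contra hcon
        push Not at hcon
        have := key ((‖(∑ i, P i) v‖ ^ 2 + 1) / (inner ℂ v ((∑ i, P i) v)).re)
        rw [div_mul_cancel₀ _ hcon.ne'] at this
        linarith
      rw [sum_proj_inner _ _ hproj] at hz
      have h1 : ‖P i v‖ ^ 2 ≤ ∑ i, ‖P i v‖ ^ 2 :=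
        Finset.single_le_sum (f := fun i => ‖P i v‖ ^ 2) (fun _ _ => by positivity)
          (Finset.mem_univ i)
      have h2 : ‖P i v‖ ^ 2 = 0 := le_antisymm (h1.trans hz) (by positivity)
      simpa using h2
    have g0 : γ = 0 := by
      rw [hγ, minNonzeroEig, hem, Real.sInf_empty]
    have gt0 : γt = 0 := by
      rw [hγt 0]
      simp only [hP0, Finset.sum_const_zero] at hem ⊢
      rw [minNonzeroEig, hem, Real.sInf_empty]
    rw [g0, gt0]
    have : 0 ≤ 1 / ((t : ℝ) - 2) := by positivity
    linarith
  have hsuff : ((t : ℝ) - 1) / ((t : ℝ) - 2) * γt - 1 / ((t : ℝ) - 2) ≤ γ := by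
    rw [hγ]
    refine le_csInf hne ?_
    rintro c ⟨hc, v, hv, hHv⟩
    -- local gap inequality
    have hloc_gap : ∀ k : Fin n,
        γt * ∑ a ∈ A, ‖P (k + a) v‖ ^ 2
          ≤ ∑ a ∈ A, ∑ b ∈ A, (inner ℂ (P (k + a) v) (P (k + b) v)).re := by
      intro k
      rw [← sum_norm_sq A (fun a => P (k + a)) v,
        ← sum_proj_inner A (fun a => P (k + a)) (fun a => hproj _) v]
      refine gap_bound _ (sum_proj_symm A (fun a => P (k + a)) fun a => hproj _) ?_ γt ?_ v
      · intro w
        rw [sum_proj_inner A (fun a => P (k + a)) fun a => hproj _]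
        positivity
      · intro c hc hw
        rw [hγt k, hhk k]
        exact csInf_le (hbdd _) ⟨hc, hw⟩
    set F : Fin n → ℝ := fun d => ∑ i, (inner ℂ (P i v) (P (i + d) v)).re with hFdef
    have hsum := Finset.sum_le_sum fun k (_ : k ∈ (Finset.univ : Finset (Fin n))) => hloc_gap k
    have hR : ∑ k : Fin n, ∑ a ∈ A, ∑ b ∈ A, (inner ℂ (P (k + a) v) (P (k + b) v)).re
        = ∑ a ∈ A, ∑ b ∈ A, F (b - a) := by
      rw [Finset.sum_comm]
      refine Finset.sum_congr rfl fun a _ => ?_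
      rw [Finset.sum_comm]
      refine Finset.sum_congr rfl fun b _ => ?_
      rw [hFdef]
      refine Fintype.sum_equiv (Equiv.addRight a) _ _ fun k => ?_
      have : k + a + (b - a) = k + b := by abel
      simp only [Equiv.coe_addRight, this]
    have hAcard : (A.card : ℝ) = (t : ℝ) - 1 := by
      rw [hA, Fin.card_filter_val_lt, Nat.min_eq_right (by omega), Nat.cast_sub (by omega)]
      norm_num
    have hL : ∑ k : Fin n, γt * ∑ a ∈ A, ‖P (k + a) v‖ ^ 2
        = γt * (((t : ℝ) - 1) * ∑ i, ‖P i v‖ ^ 2) := by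
      rw [← Finset.mul_sum, Finset.sum_comm]
      congr 1
      have : ∀ a ∈ A, ∑ k : Fin n, ‖P (k + a) v‖ ^ 2 = ∑ i, ‖P i v‖ ^ 2 := fun a _ =>
        Fintype.sum_equiv (Equiv.addRight a) _ _ fun k => rfl
      rw [Finset.sum_congr rfl this, Finset.sum_const, nsmul_eq_mul, hAcard]
    rw [hL, hR] at hsum
    have hone : (1 : Fin n).val = 1 := by
      rw [Fin.val_one', Nat.mod_eq_of_lt (by omega)]
    have hFn : ∀ d : Fin n, d ≠ 0 → d ≠ 1 → d ≠ -1 → 0 ≤ F d := by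
      intro d h0 h1 h2
      refine Finset.sum_nonneg fun i _ => ?_
      refine proj_comm_nonneg _ _ (hproj _) (hproj _) (hloc _ _ ?_) v
      have e1 : i ≠ i + d := fun h => h0 (by simpa using h.symm)
      have e2 : i ≠ i + d + 1 := fun h => h2 (by
        rw [add_assoc, left_eq_add] at h
        exact eq_neg_of_add_eq_zero_left h)
      have e3 : i + 1 ≠ i + d := fun h => h1 (add_left_cancel h).symm
      have e4 : i + 1 ≠ i + d + 1 := fun h => e1 (add_right_cancel h)
      simp only [Finset.disjoint_insert_left, Finset.disjoint_singleton_left,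
        Finset.mem_insert, Finset.mem_singleton, not_or]
      exact ⟨⟨e1, e2⟩, e3, e4⟩
    have hcount := count_le t ht1 ht2 F hFn
    have hF0 : F 0 = ∑ i, ‖P i v‖ ^ 2 := by
      simp only [hFdef, add_zero]
      refine Finset.sum_congr rfl fun i _ => ?_
      exact inner_self_eq_norm_sq (𝕜 := ℂ) _
    have hFs : ∑ d, F d = ‖(∑ i, P i) v‖ ^ 2 := by
      rw [sum_norm_sq, hFdef, Finset.sum_comm]
      refine Finset.sum_congr rfl fun i _ => ?_
      exact Fintype.sum_equiv (Equiv.addLeft i) _ _ fun k => rfl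
    have hq : ∑ i, ‖P i v‖ ^ 2 = c * ‖v‖ ^ 2 := by
      rw [← sum_proj_inner _ _ hproj, hHv, inner_smul_right, Complex.re_ofReal_mul]
      exact congrArg (c * ·) (inner_self_eq_norm_sq (𝕜 := ℂ) v)
    have hq2 : ‖(∑ i, P i) v‖ ^ 2 = c ^ 2 * ‖v‖ ^ 2 := by
      rw [hHv, norm_smul, mul_pow]
      simp
    rw [hF0, hFs, hq2, hq] at hcount
    rw [hq] at hsum
    have hvpos : 0 < c * ‖v‖ ^ 2 := by
      have := norm_pos_iff.2 hv
      positivity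
    have hfin : γt * ((t : ℝ) - 1) ≤ ((t : ℝ) - 2) * c + 1 := by
      refine le_of_mul_le_mul_right ?_ hvpos
      have := hsum.trans hcount
      nlinarith
    rw [div_mul_eq_mul_div, ← sub_div, div_le_iff₀ ht0]
    linarith
  linarith
end
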